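/- Let Λ be a lattice in ℂ with complex multiplication by R such that g₂(Λ) and g₃(Λ) are algebraic over ℚ. Then for every nonzero fractional ideal 𝔞 of 𝓞_K, both g₂(𝔞·Λ) and g₃(𝔞·Λ) are algebraic over ℚ. -/

import Mathlib

open NumberField

/-- The Eisenstein series `g₂` of an additive subgroup of `ℂ`. -/
noncomputable def g₂ (Λ : AddSubgroup ℂ) : ℂ :=
  60 * ∑' w : {w : ℂ // w ∈ Λ ∧ w ≠ 0}, ((w : ℂ) ^ 4)⁻¹

/-- The Eisenstein series `g₃` of an additive subgroup of `ℂ`. -/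
noncomputable def g₃ (Λ : AddSubgroup ℂ) : ℂ :=
  140 * ∑' w : {w : ℂ // w ∈ Λ ∧ w ≠ 0}, ((w : ℂ) ^ 6)⁻¹

/-- For a fractional ideal `𝔞` of `𝓞 K` and a subset `S ⊆ ℂ`, the additive subgroup `𝔞·S`
of `ℂ` generated by the products `τ(a)·s` for `a ∈ 𝔞`, `s ∈ S`. -/
noncomputable def idealMul {K : Type*} [Field K] [NumberField K] (τ : K →+* ℂ)
    (𝔞 : FractionalIdeal (nonZeroDivisors (𝓞 K)) K) (S : Set ℂ) : AddSubgroup ℂ :=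
  AddSubgroup.closure {x : ℂ | ∃ a ∈ 𝔞, ∃ s ∈ S, x = τ a * s}

/-!
The differential equation `℘'' = 6 ℘² - g₂ / 2` shows that the Eisenstein values of a lattice `Λ`
are polynomials in `g₂` and `g₃`, and that `℘⁽²ᵐ⁾ = Pₘ(℘)` with `Pₘ` a polynomial of degree `m + 1`
over `ℚ(g₂, g₃)`. Summing `℘⁽²ᵐ⁾`, which is a multiple of `∑_{w ∈ Λ} (w - z)⁻²ᵐ⁻²`, over the nonzero
`N`-torsion points gives a multiple of an Eisenstein value, hence an algebraic number. Finitely many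
complex numbers `xᵢ` for which the sums `∑ Pₘ(xᵢ)` are algebraic for all large `m` are themselves
algebraic: at a valuation ring containing the algebraic numbers but not all `xᵢ`, dividing by a
power of an `xᵢ` of largest valuation would leave residues, not all zero, almost all of whose power
sums vanish. So `℘` takes algebraic values at torsion points. Since `𝔞 Λ` is commensurable with `Λ`,
a rational multiple of it is a finite union of torsion translates of `Λ`, over each of which the
Eisenstein sum is a polynomial in a torsion value of `℘` (or an Eisenstein value of `Λ` itself).
-/

section PowerSums

open Polynomial IsLocalRing
open scoped Finset

variable {ι : Type*} [Fintype ι]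

theorem eq_zero_of_sum_pow_eq_zero {F : Type*} [Field F] [CharZero F] {ξ : ι → F} {d : ℕ}
    (h : ∀ n > d, ∑ i, ξ i ^ n = 0) (j : ι) : ξ j = 0 := by
  classical
  have sum_mul_eval (q : F[X]) : ∑ i, ξ i ^ (d + 1) * q.eval (ξ i) = 0 := by
    simp_rw [eval_eq_sum_range, Finset.mul_sum]
    rw [Finset.sum_comm]
    refine Finset.sum_eq_zero fun k _ ↦ ?_
    calc ∑ i, ξ i ^ (d + 1) * (q.coeff k * ξ i ^ k)
        = q.coeff k * ∑ i, ξ i ^ (d + 1 + k) := by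
          rw [Finset.mul_sum]
          exact Finset.sum_congr rfl fun i _ ↦ by ring
      _ = 0 := by rw [h _ (by omega), mul_zero]
  have eval_basis (i : ι) :
      ξ i ^ (d + 1) * (Lagrange.basis (Finset.univ.image ξ) id (ξ j)).eval (ξ i) =
        if ξ i = ξ j then ξ j ^ (d + 1) else 0 := by
    split_ifs with hij
    · have := Lagrange.eval_basis_self (v := id) Function.injective_id.injOn
        (Finset.mem_image_of_mem ξ (Finset.mem_univ j))
      rw [id_eq] at this
      rw [hij, this, mul_one]
    · have := Lagrange.eval_basis_of_ne (v := id) (Ne.symm hij)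
        (Finset.mem_image_of_mem ξ (Finset.mem_univ i))
      rw [id_eq] at this
      rw [this, mul_zero]
  have card_mul : (#{i | ξ i = ξ j} : F) * ξ j ^ (d + 1) = 0 := by
    rw [← nsmul_eq_mul, ← Finset.sum_const, Finset.sum_filter]
    simp_rw [← eval_basis]
    exact sum_mul_eval _
  have card_ne_zero : (#{i | ξ i = ξ j} : F) ≠ 0 :=
    Nat.cast_ne_zero.mpr (Finset.card_ne_zero_of_mem (a := j) (by simp))
  exact eq_zero_of_pow_eq_zero (n := d + 1) ((mul_eq_zero.mp card_mul).resolve_left card_ne_zero)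

theorem map_eval_scaleRoots_of_map_eq_zero {R S : Type*} [CommRing R] [CommRing S] (f : R →+* S)
    {P : R[X]} (hP : f P.leadingCoeff ≠ 0) {t : R} (ht : f t = 0) (y : R) :
    f ((P.scaleRoots t).eval y) = f P.leadingCoeff * f y ^ P.natDegree := by
  rw [← eval_map_apply, map_scaleRoots _ _ _ hP, ht, scaleRoots_zero,
    leadingCoeff_map_of_leadingCoeff_ne_zero _ hP, natDegree_map_of_leadingCoeff_ne_zero _ hP]
  simp

variable {E : Type*} [Field E] {x : ι → E} {d : ℕ}

-- After dividing by an `x j` of maximal valuation, only leading terms survive in the residue field.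
theorem mem_valuationSubring_of_sum_aeval_mem (V : ValuationSubring E)
    [CharZero (ResidueField V)]
    (h : ∀ n > d, ∃ P : V[X], P.natDegree = n ∧ IsUnit P.leadingCoeff ∧
      ∑ i, aeval (x i) P ∈ V) (i : ι) : x i ∈ V := by
  by_contra hi
  have : Nonempty ι := ⟨i⟩
  obtain ⟨j, hj⟩ := Finite.exists_max fun i ↦ V.valuation (x i)
  have one_lt : 1 < V.valuation (x j) := by
    refine lt_of_lt_of_le ?_ (hj i)
    rwa [← not_le, V.valuation_le_one_iff]
  have inv_lt : V.valuation (x j)⁻¹ < 1 := by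
    rw [map_inv₀]
    exact inv_lt_one_of_one_lt₀ one_lt
  let t : V := ⟨(x j)⁻¹, (V.valuation_le_one_iff _).mp inv_lt.le⟩
  have residue_t : residue V t = 0 :=
    (residue_eq_zero_iff t).mpr ((V.valuation_lt_one_iff t).mpr inv_lt)
  have mul_mem (i : ι) : (x j)⁻¹ * x i ∈ V := by
    rw [← V.valuation_le_one_iff, map_mul, map_inv₀, inv_mul_eq_div]
    exact div_le_one_of_le₀ (hj i) zero_le
  let y (i : ι) : V := ⟨(x j)⁻¹ * x i, mul_mem i⟩
  have residue_sum (n : ℕ) (hn : n > d) : ∑ i, residue V (y i) ^ n = 0 := by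
    obtain ⟨P, rfl, hunit, hmem⟩ := h n hn
    have hlead : residue V P.leadingCoeff ≠ 0 := (residue_ne_zero_iff_isUnit _).mpr hunit
    have sum_eq : ∑ i, (P.scaleRoots t).eval (y i) = t ^ P.natDegree * ⟨_, hmem⟩ := by
      refine Subtype.ext ?_
      push_cast
      rw [Finset.mul_sum]
      refine Finset.sum_congr rfl fun i _ ↦ ?_
      exact (eval₂_at_apply (algebraMap V E) (y i)).symm.trans
        (scaleRoots_eval₂_mul (algebraMap V E) (x i) t)
    have := congrArg (residue V) sum_eq
    simp only [map_sum, map_mul, map_pow, residue_t,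
      map_eval_scaleRoots_of_map_eq_zero _ hlead residue_t, ← Finset.mul_sum] at this
    rw [zero_pow (Nat.ne_zero_of_lt hn), zero_mul] at this
    exact (mul_eq_zero.mp this).resolve_left hlead
  have y_j : y j = 1 := Subtype.ext (inv_mul_cancel₀ fun h0 ↦ by simp [h0] at one_lt)
  simpa [y_j] using eq_zero_of_sum_pow_eq_zero residue_sum j

theorem mem_subfield_of_sum_aeval_mem [CharZero E] (k : Subfield E) [IsIntegrallyClosedIn k E]
    (h : ∀ n > d, ∃ P : k[X], P.natDegree = n ∧ ∑ i, aeval (x i) P ∈ k) (j : ι) : x j ∈ k := by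
  by_contra hj
  have : IsIntegrallyClosedIn k.toSubring E := ‹IsIntegrallyClosedIn k E›
  obtain ⟨V, hkV, hjV⟩ := k.toSubring.exists_le_valuationSubring_of_isIntegrallyClosedIn hj
  let f : k →+* V := Subring.inclusion hkV
  have : CharZero (ResidueField V) := charZero_of_injective_ringHom ((residue V).comp f).injective
  refine hjV (mem_valuationSubring_of_sum_aeval_mem (d := d) V (fun n hn ↦ ?_) j)
  obtain ⟨P, hdeg, hmem⟩ := h n hn
  have hP : P ≠ 0 := by
    rintro rfl
    exact Nat.ne_zero_of_lt hn hdeg.symm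
  refine ⟨P.map f, by rw [natDegree_map, hdeg], ?_, ?_⟩
  · rw [leadingCoeff_map]
    exact (IsUnit.mk0 _ (leadingCoeff_ne_zero.mpr hP)).map f
  · have aeval_map (i : ι) : aeval (x i) (P.map f) = aeval (x i) P := eval₂_map ..
    simp_rw [aeval_map]
    exact hkV hmem

end PowerSums

section WeierstrassODE

open Polynomial
open scoped PeriodPair Topology

variable (L : PeriodPair)

variable {L} in
theorem compl_lattice_mem_nhds {z : ℂ} (hz : z ∉ L.lattice) : (L.lattice : Set ℂ)ᶜ ∈ 𝓝 z :=
  L.isClosed_lattice.isOpen_compl.mem_nhds hz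

theorem isPreconnected_compl_lattice : IsPreconnected (L.lattice : Set ℂ)ᶜ := by
  have : Countable L.lattice := L.latticeEquivProd.toEquiv.countable_iff.mpr inferInstance
  exact (Set.Countable.isConnected_compl_of_one_lt_rank (by simp)
    (Set.countable_coe_iff.mp this)).isPreconnected

theorem derivWeierstrassP_ne_zero : ℘'[L] ≠ 0 := by
  intro h
  have order_deriv : meromorphicOrderAt (deriv ℘[L]) 0 = ((-2 - 1 : ℤ) : WithTop ℤ) :=
    meromorphicOrderAt_deriv_eq_sub_one (by norm_num) (L.order_weierstrassP 0 (zero_mem _))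
  have order_top : meromorphicOrderAt (deriv ℘[L]) 0 = ⊤ :=
    meromorphicOrderAt_eq_top_iff.mpr (by simp [h])
  exact WithTop.coe_ne_top (order_deriv.symm.trans order_top)

variable {L} {z : ℂ}

theorem hasDerivAt_weierstrassP (hz : z ∉ L.lattice) : HasDerivAt ℘[L] (℘'[L] z) z := by
  rw [← L.deriv_weierstrassP]
  exact (L.analyticOnNhd_weierstrassP z hz).differentiableAt.hasDerivAt

theorem derivWeierstrassP_mul_deriv (hz : z ∉ L.lattice) :
    ℘'[L] z * (deriv ℘'[L] z - (6 * ℘[L] z ^ 2 - L.g₂ / 2)) = 0 := by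
  have hasDerivAt_sq := (L.analyticOnNhd_derivWeierstrassP z hz).differentiableAt.hasDerivAt.pow 2
  have hasDerivAt_cubic := ((((hasDerivAt_weierstrassP hz).pow 3).const_mul 4).sub
    ((hasDerivAt_weierstrassP hz).const_mul L.g₂)).sub_const L.g₃
  have sq_eventuallyEq : ℘'[L] ^ 2 =ᶠ[𝓝 z] fun w ↦ 4 * ℘[L] w ^ 3 - L.g₂ * ℘[L] w - L.g₃ := by
    filter_upwards [compl_lattice_mem_nhds hz] with w hw using L.derivWeierstrassP_sq w hw
  have := hasDerivAt_sq.unique (hasDerivAt_cubic.congr_of_eventuallyEq sq_eventuallyEq)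
  simp only [Nat.cast_ofNat] at this
  linear_combination this / 2

theorem deriv_derivWeierstrassP (hz : z ∉ L.lattice) :
    deriv ℘'[L] z = 6 * ℘[L] z ^ 2 - L.g₂ / 2 := by
  have analyticOnNhd_sub : AnalyticOnNhd ℂ
      (fun w ↦ deriv ℘'[L] w - (6 * ℘[L] w ^ 2 - L.g₂ / 2)) (L.lattice : Set ℂ)ᶜ := fun w hw ↦ by
    have := L.analyticOnNhd_weierstrassP w hw
    have := (L.analyticOnNhd_derivWeierstrassP w hw).deriv
    fun_prop
  have not_eqOn_zero : ¬ ∀ w ∈ (L.lattice : Set ℂ)ᶜ, ℘'[L] w = 0 := by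
    refine fun h ↦ derivWeierstrassP_ne_zero L (funext fun w ↦ ?_)
    by_cases hw : w ∈ L.lattice
    · exact L.derivWeierstrassP_coe ⟨w, hw⟩
    · exact h w hw
  exact sub_eq_zero.mp <| (L.analyticOnNhd_derivWeierstrassP.eq_zero_or_eq_zero_of_mul_eq_zero
    analyticOnNhd_sub (fun w hw ↦ derivWeierstrassP_mul_deriv hw)
    (isPreconnected_compl_lattice L)).resolve_left not_eqOn_zero z hz

theorem hasDerivAt_derivWeierstrassP (hz : z ∉ L.lattice) :
    HasDerivAt ℘'[L] (6 * ℘[L] z ^ 2 - L.g₂ / 2) z := by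
  rw [← deriv_derivWeierstrassP hz]
  exact (L.analyticOnNhd_derivWeierstrassP z hz).differentiableAt.hasDerivAt

variable {F : Type*} [Field F]

/-- The operator on polynomials induced by `d²/dz²` when `X` stands for a function `p` of `z`
with `p'² = 4p³ - ap - b` and `p'' = 6p² - a/2`, as is the case for the Weierstrass function with
`g₂ = a` and `g₃ = b`. -/
noncomputable def weierstrassSecondDeriv (a b : F) (P : F[X]) : F[X] :=
  derivative (derivative P) * (4 * X ^ 3 - C a * X - C b) + derivative P * (6 * X ^ 2 - C (a / 2))

theorem coeff_weierstrassSecondDeriv (a b : F) (P : F[X]) (n : ℕ) :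
    (weierstrassSecondDeriv a b P).coeff (n + 2) =
      (n + 1) * (4 * n + 6) * P.coeff (n + 1) - (a * (n + 2) + a / 2) * (n + 3) * P.coeff (n + 3)
        - b * (n + 4) * (n + 3) * P.coeff (n + 4) := by
  have expand : weierstrassSecondDeriv a b P =
      C 4 * derivative (derivative P) * X ^ 3 - C a * derivative (derivative P) * X
        - C b * derivative (derivative P) + C 6 * derivative P * X ^ 2
        - C (a / 2) * derivative P := by
    simp only [weierstrassSecondDeriv, map_ofNat]
    ring
  rw [expand]
  cases n <;>
    simp [coeff_mul_X_pow', coeff_mul_X, coeff_C_mul, coeff_derivative] <;> ring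

theorem natDegree_weierstrassSecondDeriv [CharZero F] (a b : F) {P : F[X]}
    (hP : 0 < P.natDegree) :
    (weierstrassSecondDeriv a b P).natDegree = P.natDegree + 1 := by
  obtain ⟨n, hn⟩ := Nat.exists_eq_add_of_le' hP
  have coeff_eq_zero (l : ℕ) (hl : n + 1 < l) : P.coeff l = 0 :=
    coeff_eq_zero_of_natDegree_lt (hn ▸ hl)
  refine natDegree_eq_of_le_of_coeff_ne_zero ?_ ?_
  · refine natDegree_le_iff_coeff_eq_zero.mpr fun N hN ↦ ?_
    obtain ⟨m, rfl⟩ := Nat.exists_eq_add_of_le' (show 2 ≤ N by omega)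
    rw [coeff_weierstrassSecondDeriv, coeff_eq_zero _ (by omega), coeff_eq_zero _ (by omega),
      coeff_eq_zero _ (by omega)]
    ring
  · rw [hn, coeff_weierstrassSecondDeriv, coeff_eq_zero (n + 3) (by omega),
      coeff_eq_zero (n + 4) (by omega), mul_zero, mul_zero, sub_zero, sub_zero]
    have leadingCoeff_ne_zero : P.coeff (n + 1) ≠ 0 := by
      rw [← hn]
      exact leadingCoeff_ne_zero.mpr (ne_zero_of_natDegree_gt hP)
    have factor_ne_zero : ((n : F) + 1) * (4 * n + 6) ≠ 0 := by norm_cast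
    exact mul_ne_zero factor_ne_zero leadingCoeff_ne_zero

theorem natDegree_iterate_weierstrassSecondDeriv_X [CharZero F] (a b : F) (m : ℕ) :
    ((weierstrassSecondDeriv a b)^[m] X).natDegree = m + 1 := by
  induction m with
  | zero => simp
  | succ m ih =>
    rw [Function.iterate_succ_apply', natDegree_weierstrassSecondDeriv a b (by omega), ih]

variable [Algebra F ℂ] {a b : F}

theorem iteratedDeriv_two_aeval_weierstrassP (ha : algebraMap F ℂ a = L.g₂)
    (hb : algebraMap F ℂ b = L.g₃) (hz : z ∉ L.lattice) (P : F[X]) :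
    iteratedDeriv 2 (fun w ↦ aeval (℘[L] w) P) z =
      aeval (℘[L] z) (weierstrassSecondDeriv a b P) := by
  have deriv_aeval {w : ℂ} (hw : w ∉ L.lattice) (Q : F[X]) :
      HasDerivAt (fun v ↦ aeval (℘[L] v) Q) (aeval (℘[L] w) (derivative Q) * ℘'[L] w) w :=
    (Q.hasDerivAt_aeval (℘[L] w)).comp w (hasDerivAt_weierstrassP hw)
  have deriv_eventuallyEq : deriv (fun v ↦ aeval (℘[L] v) P) =ᶠ[𝓝 z]
      fun v ↦ aeval (℘[L] v) (derivative P) * ℘'[L] v := by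
    filter_upwards [compl_lattice_mem_nhds hz] with v hv using (deriv_aeval hv P).deriv
  rw [iteratedDeriv_succ, iteratedDeriv_one, deriv_eventuallyEq.deriv_eq,
    ((deriv_aeval hz (derivative P)).fun_mul (hasDerivAt_derivWeierstrassP hz)).deriv,
    weierstrassSecondDeriv, mul_assoc, ← sq, L.derivWeierstrassP_sq z hz]
  simp only [map_add, map_sub, map_mul, map_pow, map_ofNat, map_div₀, aeval_X, aeval_C, ha, hb]

theorem iteratedDeriv_weierstrassP_two_mul (ha : algebraMap F ℂ a = L.g₂)
    (hb : algebraMap F ℂ b = L.g₃) (m : ℕ) (hz : z ∉ L.lattice) :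
    iteratedDeriv (2 * m) ℘[L] z = aeval (℘[L] z) ((weierstrassSecondDeriv a b)^[m] X) := by
  induction m generalizing z with
  | zero => simp
  | succ m ih =>
    have ih_eventuallyEq : iteratedDeriv (2 * m) ℘[L] =ᶠ[𝓝 z]
        fun w ↦ aeval (℘[L] w) ((weierstrassSecondDeriv a b)^[m] X) := by
      filter_upwards [compl_lattice_mem_nhds hz] with w hw using ih hw
    rw [Function.iterate_succ_apply', ← iteratedDeriv_two_aeval_weierstrassP ha hb hz,
      ← ih_eventuallyEq.iteratedDeriv_eq 2]
    simp only [iteratedDeriv_eq_iterate, ← Function.iterate_add_apply]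
    ring_nf

theorem iteratedDeriv_weierstrassP {n : ℕ} (hn : n ≠ 0) (hz : z ∉ L.lattice) :
    iteratedDeriv n ℘[L] z = (n + 1).factorial * L.sumInvPow z (n + 2) := by
  rw [← L.weierstrassPExcept_of_notMem z hz, L.iteratedDeriv_weierstrassPExcept_self, if_neg hn]

end WeierstrassODE

section EisensteinValues

open scoped PeriodPair Topology

theorem iteratedDeriv_sq_mul {𝕜 : Type*} [NontriviallyNormedField 𝕜] {f : 𝕜 → 𝕜} {n : ℕ}
    (hf : ContDiffAt 𝕜 (n + 2 : ℕ) f 0) :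
    iteratedDeriv (n + 2) (fun z ↦ z ^ 2 * f z) 0 = (n + 2) * (n + 1) * iteratedDeriv n f 0 := by
  rw [iteratedDeriv_fun_mul (by fun_prop) hf, Finset.sum_eq_single_of_mem 2 (by simp)]
  · have two_mul_choose : ((n + 2).choose 2 : 𝕜) * 2 = (n + 2) * (n + 1) := by
      have := Nat.add_one_mul_choose_eq (n + 1) 1
      rw [Nat.choose_one_right] at this
      exact_mod_cast congrArg (Nat.cast : ℕ → 𝕜) this.symm
    simp [two_mul_choose]
  · intro i _ hi
    have pow_zero : iteratedDeriv i (fun z : 𝕜 ↦ z ^ 2) 0 = 0 := by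
      rw [iteratedDeriv_fun_pow_zero, if_neg hi, Nat.cast_zero]
    rw [pow_zero, mul_zero, zero_mul]

variable {L : PeriodPair}

theorem weierstrassPExcept_zero (z : ℂ) : L.weierstrassPExcept 0 z = ℘[L] z - (z ^ 2)⁻¹ := by
  simpa [sub_eq_add_neg] using L.weierstrassPExcept_def 0 z

theorem iteratedDeriv_two_weierstrassPExcept_zero {z : ℂ} (hz : z ∉ L.lattice) :
    iteratedDeriv 2 (L.weierstrassPExcept 0) z = 6 * ℘[L] z ^ 2 - L.g₂ / 2 - 6 * (z ^ 4)⁻¹ := by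
  have hz0 : z ≠ 0 := fun h ↦ hz (h ▸ zero_mem _)
  have contDiffAt_inv_sq : ContDiffAt ℂ 2 (fun w : ℂ ↦ (w ^ 2)⁻¹) z :=
    (contDiffAt_id.pow 2).inv (pow_ne_zero 2 hz0)
  have iteratedDeriv_inv_sq : iteratedDeriv 2 (fun w : ℂ ↦ (w ^ 2)⁻¹) z = 6 * (z ^ 4)⁻¹ := by
    have := iter_deriv_zpow (-2) z 2
    rw [iteratedDeriv_eq_iterate]
    norm_num [Finset.prod_range_succ, zpow_neg] at this ⊢
    exact_mod_cast this
  rw [funext weierstrassPExcept_zero,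
    iteratedDeriv_fun_sub (L.analyticOnNhd_weierstrassP z hz).contDiffAt contDiffAt_inv_sq,
    iteratedDeriv_inv_sq, iteratedDeriv_succ, iteratedDeriv_one, L.deriv_weierstrassP,
    deriv_derivWeierstrassP hz]

theorem sq_mul_iteratedDeriv_two_weierstrassPExcept_zero :
    (fun z ↦ z ^ 2 * iteratedDeriv 2 (L.weierstrassPExcept 0) z) =ᶠ[𝓝 0]
      fun z ↦ z ^ 2 * (6 * (L.weierstrassPExcept 0 z * L.weierstrassPExcept 0 z) - L.g₂ / 2) +
        12 * L.weierstrassPExcept 0 z := by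
  filter_upwards [L.compl_lattice_sdiff_singleton_mem_nhds 0] with z hz
  by_cases hz0 : z = 0
  · simp [hz0]
  have hzL : z ∉ L.lattice := by simp_all
  rw [iteratedDeriv_two_weierstrassPExcept_zero hzL, weierstrassPExcept_zero]
  field

theorem iteratedDeriv_weierstrassPExcept_zero_recurrence {n : ℕ} (hn : n ≠ 0) :
    ((n : ℂ) + 5) * (n - 2) * iteratedDeriv (n + 2) (L.weierstrassPExcept 0) 0 =
      6 * (n + 2) * (n + 1) * ∑ i ∈ Finset.range (n + 1),
        n.choose i * iteratedDeriv i (L.weierstrassPExcept 0) 0 *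
          iteratedDeriv (n - i) (L.weierstrassPExcept 0) 0 := by
  have analytic : AnalyticAt ℂ (L.weierstrassPExcept 0) 0 := L.analyticAt_weierstrassPExcept 0
  have analytic_deriv : AnalyticAt ℂ (iteratedDeriv 2 (L.weierstrassPExcept 0)) 0 := by
    rw [iteratedDeriv_succ, iteratedDeriv_one]
    exact analytic.deriv.deriv
  have analytic_sq : AnalyticAt ℂ
      (fun z ↦ 6 * (L.weierstrassPExcept 0 z * L.weierstrassPExcept 0 z) - L.g₂ / 2) 0 := by
    fun_prop
  have ode := (sq_mul_iteratedDeriv_two_weierstrassPExcept_zero (L := L)).iteratedDeriv_eq (n + 2)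
  rw [iteratedDeriv_sq_mul analytic_deriv.contDiffAt,
    iteratedDeriv_fun_add (by apply AnalyticAt.contDiffAt; fun_prop)
      (by apply AnalyticAt.contDiffAt; fun_prop),
    iteratedDeriv_sq_mul analytic_sq.contDiffAt, iteratedDeriv_const_mul_field,
    iteratedDeriv_fun_sub (by apply AnalyticAt.contDiffAt; fun_prop) (by fun_prop),
    iteratedDeriv_const_mul_field, iteratedDeriv_fun_mul analytic.contDiffAt analytic.contDiffAt,
    iteratedDeriv_const, if_neg hn, sub_zero] at ode
  have iteratedDeriv_add_two :
      iteratedDeriv n (iteratedDeriv 2 (L.weierstrassPExcept 0)) 0 =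
        iteratedDeriv (n + 2) (L.weierstrassPExcept 0) 0 := by
    simp only [iteratedDeriv_eq_iterate, ← Function.iterate_add_apply]
  rw [iteratedDeriv_add_two] at ode
  linear_combination ode

theorem iteratedDeriv_weierstrassPExcept_zero_eq_G {n : ℕ} (hn : n ≠ 0) :
    iteratedDeriv n (L.weierstrassPExcept 0) 0 = (n + 1).factorial * L.G (n + 2) := by
  rw [L.iteratedDeriv_weierstrassPExcept_self, if_neg hn, L.sumInvPow_zero]

theorem mem_of_mul_mem_left {E : Type*} [Field E] {k : Subfield E} {c x : E} (hc : c ∈ k)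
    (hc0 : c ≠ 0) (h : c * x ∈ k) : x ∈ k := by
  simpa [hc0] using mul_mem (inv_mem hc) h

variable {k : Subfield ℂ}

theorem iteratedDeriv_weierstrassPExcept_zero_mem (h2 : L.g₂ ∈ k) (h3 : L.g₃ ∈ k) (n : ℕ) :
    iteratedDeriv n (L.weierstrassPExcept 0) 0 ∈ k := by
  have G_four_mem : L.G 4 ∈ k := by
    simpa [PeriodPair.g₂] using div_mem h2 (ofNat_mem k 60)
  have G_six_mem : L.G 6 ∈ k := by
    simpa [PeriodPair.g₃] using div_mem h3 (ofNat_mem k 140)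
  induction n using Nat.strong_induction_on with
  | _ n ih =>
  match n with
  | 0 => simp
  | 1 => simp [iteratedDeriv_weierstrassPExcept_zero_eq_G, L.G_eq_zero_of_odd 3 (by decide)]
  | 2 =>
    rw [iteratedDeriv_weierstrassPExcept_zero_eq_G two_ne_zero]
    exact mul_mem (natCast_mem k _) G_four_mem
  | 3 => simp [iteratedDeriv_weierstrassPExcept_zero_eq_G, L.G_eq_zero_of_odd 5 (by decide)]
  | 4 =>
    rw [iteratedDeriv_weierstrassPExcept_zero_eq_G four_ne_zero]
    exact mul_mem (natCast_mem k _) G_six_mem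
  | m + 5 =>
    have sum_mem_k : ∑ i ∈ Finset.range (m + 3 + 1), ((m + 3).choose i : ℂ) *
        iteratedDeriv i (L.weierstrassPExcept 0) 0 *
        iteratedDeriv (m + 3 - i) (L.weierstrassPExcept 0) 0 ∈ k :=
      sum_mem fun i hi ↦ mul_mem
        (mul_mem (natCast_mem k _) (ih i (by simp at hi; omega))) (ih _ (by omega))
    refine mem_of_mul_mem_left (natCast_mem k ((m + 8) * (m + 1)))
      (Nat.cast_ne_zero.mpr (by positivity)) ?_
    convert mul_mem (natCast_mem k (6 * (m + 5) * (m + 4))) sum_mem_k using 1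
    push_cast
    have recurrence :=
      iteratedDeriv_weierstrassPExcept_zero_recurrence (L := L) (n := m + 3) (by omega)
    rw [Nat.cast_add, Nat.cast_ofNat] at recurrence
    linear_combination recurrence

theorem G_add_three_mem (h2 : L.g₂ ∈ k) (h3 : L.g₃ ∈ k) (n : ℕ) : L.G (n + 3) ∈ k := by
  have := iteratedDeriv_weierstrassPExcept_zero_mem h2 h3 (n + 1)
  rw [iteratedDeriv_weierstrassPExcept_zero_eq_G n.succ_ne_zero] at this
  have factorial_ne_zero : ((n + 1 + 1).factorial : ℂ) ≠ 0 :=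
    Nat.cast_ne_zero.mpr (Nat.factorial_ne_zero _)
  exact mem_of_mul_mem_left (natCast_mem k _) factorial_ne_zero this

end EisensteinValues

section FiniteIndex

theorem hasSum_of_hasSum_leftCoset {G E : Type*} [AddGroup G] {H : AddSubgroup G}
    [Fintype (G ⧸ H)] [AddCommMonoid E] [TopologicalSpace E] [ContinuousAdd E] {f : G → E}
    {a : G ⧸ H → E} (h : ∀ q : G ⧸ H, HasSum (fun x : H ↦ f (q.out + x)) (a q)) :
    HasSum f (∑ q, a q) := by
  classical
  have hasSum_fiber (q : G ⧸ H) :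
      HasSum (fun y : G ↦ if (y : G ⧸ H) = q then f y else 0) (a q) := by
    have out_add_injective : Function.Injective fun x : H ↦ q.out + (x : G) :=
      (add_right_injective _).comp Subtype.val_injective
    refine (out_add_injective.hasSum_iff fun y hy ↦ if_neg ?_).mp ?_
    · rintro rfl
      have : -(y : G ⧸ H).out + y ∈ H := QuotientAddGroup.eq.mp (Quotient.out_eq' _)
      exact hy ⟨⟨_, this⟩, add_neg_cancel_left _ _⟩
    · convert h q using 2 with x
      simp
  simpa using hasSum_sum (s := Finset.univ) fun q _ ↦ hasSum_fiber q

theorem isFiniteRelIndex_of_nsmul_mem {A : Type*} [AddCommGroup A] [IsAddTorsionFree A]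
    {H M : AddSubgroup A} (hH : H.FG) {n : ℕ} (hn : n ≠ 0) (h : ∀ x ∈ M, n • x ∈ H) :
    H.IsFiniteRelIndex M := by
  have map_le : M.map (nsmulAddMonoidHom n) ≤ H := AddSubgroup.map_le_iff_le_comap.mpr h
  have map_fg : ((AddSubgroup.toIntSubmodule M).map (nsmulAddMonoidHom n).toIntLinearMap).FG :=
    ((Submodule.fg_iff_addSubgroup_fg (AddSubgroup.toIntSubmodule H)).mpr hH).of_le map_le
  have fg : M.FG := (Submodule.fg_iff_addSubgroup_fg (AddSubgroup.toIntSubmodule M)).mp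
    (Submodule.fg_of_fg_map_injective _ (nsmul_right_injective hn) map_fg)
  have := AddSubgroup.isFiniteRelIndex_map_nsmulAddMonoidHom_of_fg fg hn
  exact AddSubgroup.isFiniteRelIndex_of_le_left M map_le

end FiniteIndex

section LatticeSums

open Polynomial
open scoped PeriodPair

/-- The Eisenstein sum of weight `r` of an additive subgroup of `ℂ`. For `r ≠ 0` the origin
contributes `0⁻¹ = 0`, so that the sum effectively runs over the nonzero elements. -/
noncomputable def eisensteinSum (M : AddSubgroup ℂ) (r : ℕ) : ℂ :=
  ∑' w : M, ((w : ℂ) ^ r)⁻¹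

theorem tsum_ne_zero_eq_eisensteinSum (M : AddSubgroup ℂ) {r : ℕ} (hr : r ≠ 0) :
    ∑' w : {w : ℂ // w ∈ M ∧ w ≠ 0}, ((w : ℂ) ^ r)⁻¹ = eisensteinSum M r := by
  let incl : {w : ℂ // w ∈ M ∧ w ≠ 0} → M := fun w ↦ ⟨w, w.2.1⟩
  have incl_injective : Function.Injective incl := fun v w h ↦
    Subtype.ext (congrArg (Subtype.val : M → ℂ) h)
  refine incl_injective.tsum_eq (f := fun w : M ↦ ((w : ℂ) ^ r)⁻¹) fun w hw ↦ ?_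
  have hw0 : (w : ℂ) ≠ 0 := by rintro h; simp [h, hr] at hw
  exact ⟨⟨w, w.2, hw0⟩, rfl⟩

theorem g₂_eq_eisensteinSum (M : AddSubgroup ℂ) : g₂ M = 60 * eisensteinSum M 4 := by
  rw [g₂, tsum_ne_zero_eq_eisensteinSum M four_ne_zero]

theorem g₃_eq_eisensteinSum (M : AddSubgroup ℂ) : g₃ M = 140 * eisensteinSum M 6 := by
  rw [g₃, tsum_ne_zero_eq_eisensteinSum M (by decide)]

theorem eisensteinSum_comap_mulLeft (M : AddSubgroup ℂ) {c : ℂ} (hc : c ≠ 0) (r : ℕ) :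
    eisensteinSum (M.comap (AddMonoidHom.mulLeft c)) r = c ^ r * eisensteinSum M r := by
  let e : M.comap (AddMonoidHom.mulLeft c) ≃ M :=
    (Equiv.mulLeft₀ c hc).subtypeEquiv fun _ ↦ Iff.rfl
  rw [eisensteinSum, eisensteinSum, ← e.tsum_eq, ← tsum_mul_left]
  refine tsum_congr fun w ↦ ?_
  change _ = c ^ r * ((c * (w : ℂ)) ^ r)⁻¹
  rw [mul_pow, mul_inv, mul_inv_cancel_left₀ (pow_ne_zero r hc)]

variable {L : PeriodPair}

theorem eisensteinSum_lattice (r : ℕ) : eisensteinSum L.lattice.toAddSubgroup r = L.G r := rfl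

theorem sumInvPow_of_mem {l : ℂ} (hl : l ∈ L.lattice) (r : ℕ) : L.sumInvPow l r = L.G r :=
  (Equiv.subRight (⟨l, hl⟩ : L.lattice)).tsum_eq fun w : L.lattice ↦ ((w : ℂ) ^ r)⁻¹

variable {M : AddSubgroup ℂ}

theorem coe_out_mem_lattice_iff (q : M ⧸ L.lattice.toAddSubgroup.addSubgroupOf M) :
    (q.out : ℂ) ∈ L.lattice ↔ q = 0 := by
  conv_rhs => rw [← QuotientAddGroup.out_eq' q, QuotientAddGroup.eq_zero_iff]
  rfl

theorem weierstrassP_neg_out_mk (u : M) :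
    ℘[L] (-((u : M ⧸ L.lattice.toAddSubgroup.addSubgroupOf M).out : ℂ)) = ℘[L] u := by
  have sub_mem : -(u : ℂ) + ((u : M ⧸ L.lattice.toAddSubgroup.addSubgroupOf M).out : ℂ) ∈
      L.lattice :=
    QuotientAddGroup.eq (s := L.lattice.toAddSubgroup.addSubgroupOf M).mp
      (QuotientAddGroup.out_eq' (u : M ⧸ L.lattice.toAddSubgroup.addSubgroupOf M)).symm
  rw [L.weierstrassP_neg, ← L.weierstrassP_add_coe u ⟨_, sub_mem⟩, add_neg_cancel_left]

theorem eisensteinSum_eq_sum_sumInvPow (hLM : L.lattice.toAddSubgroup ≤ M)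
    [Fintype (M ⧸ L.lattice.toAddSubgroup.addSubgroupOf M)] {r : ℕ} (hr : 2 < r) :
    eisensteinSum M r =
      ∑ q : M ⧸ L.lattice.toAddSubgroup.addSubgroupOf M, L.sumInvPow (-(q.out : ℂ)) r := by
  refine (hasSum_of_hasSum_leftCoset fun q ↦ ?_).tsum_eq
  rw [← (AddSubgroup.addSubgroupOfEquivOfLe hLM).symm.toEquiv.hasSum_iff]
  refine (L.hasSum_sumInvPow (-(q.out : ℂ)) hr).congr_fun fun l ↦ ?_
  rw [sub_neg_eq_add, add_comm]
  rfl

theorem eisensteinSum_eq_G_add_sum (hLM : L.lattice.toAddSubgroup ≤ M)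
    [Fintype (M ⧸ L.lattice.toAddSubgroup.addSubgroupOf M)]
    [DecidableEq (M ⧸ L.lattice.toAddSubgroup.addSubgroupOf M)] {r : ℕ} (hr : 2 < r) :
    eisensteinSum M r = L.G r +
      ∑ q : {q : M ⧸ L.lattice.toAddSubgroup.addSubgroupOf M // q ≠ 0},
        L.sumInvPow (-(q.1.out : ℂ)) r := by
  rw [eisensteinSum_eq_sum_sumInvPow hLM hr, Fintype.sum_eq_add_sum_subtype_ne _ 0,
    sumInvPow_of_mem (neg_mem ((coe_out_mem_lattice_iff _).mpr rfl))]

theorem finite_quotient_lattice {n : ℕ} (hn : n ≠ 0) (hnM : ∀ x ∈ M, n • x ∈ L.lattice) :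
    Finite (M ⧸ L.lattice.toAddSubgroup.addSubgroupOf M) := by
  have lattice_fg : L.lattice.toAddSubgroup.FG :=
    (Submodule.fg_iff_addSubgroup_fg _).mp (Module.Finite.iff_fg.mp inferInstance)
  have := (isFiniteRelIndex_of_nsmul_mem lattice_fg hn hnM).to_finiteIndex_addSubgroupOf
  exact AddSubgroup.finite_quotient_of_finiteIndex

theorem factorial_mul_sumInvPow {F : Type*} [Field F] [Algebra F ℂ] {a b : F}
    (ha : algebraMap F ℂ a = L.g₂) (hb : algebraMap F ℂ b = L.g₃) {u : ℂ} (hu : u ∉ L.lattice)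
    (m : ℕ) : (2 * m + 3).factorial * L.sumInvPow u (2 * m + 4) =
      aeval (℘[L] u) ((weierstrassSecondDeriv a b)^[m + 1] X) := by
  rw [← iteratedDeriv_weierstrassP_two_mul ha hb (m + 1) hu, mul_add, mul_one,
    iteratedDeriv_weierstrassP (by omega) hu]

theorem aeval_mem_subfield {E : Type*} [Field E] {k : Subfield E} {x : E} (hx : x ∈ k)
    (P : k[X]) : aeval x P ∈ k := by
  have := aeval_algebraMap_apply E (⟨x, hx⟩ : k) P
  exact this ▸ Subtype.prop _

variable {k : Subfield ℂ}

theorem sum_aeval_weierstrassP_mem (h2 : L.g₂ ∈ k) (h3 : L.g₃ ∈ k)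
    (hLM : L.lattice.toAddSubgroup ≤ M) [Fintype (M ⧸ L.lattice.toAddSubgroup.addSubgroupOf M)]
    [DecidableEq (M ⧸ L.lattice.toAddSubgroup.addSubgroupOf M)] {m : ℕ}
    (hM : eisensteinSum M (2 * m + 4) ∈ k) :
    ∑ q : {q : M ⧸ L.lattice.toAddSubgroup.addSubgroupOf M // q ≠ 0},
      aeval (℘[L] (-(q.1.out : ℂ)))
        ((weierstrassSecondDeriv (⟨_, h2⟩ : k) ⟨_, h3⟩)^[m + 1] X) ∈ k := by
  have notMem (q : {q : M ⧸ L.lattice.toAddSubgroup.addSubgroupOf M // q ≠ 0}) :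
      -(q.1.out : ℂ) ∉ L.lattice :=
    fun h ↦ q.2 ((coe_out_mem_lattice_iff _).mp (neg_mem_iff.mp h))
  rw [Finset.sum_congr rfl fun q _ ↦ (factorial_mul_sumInvPow rfl rfl (notMem q) m).symm,
    ← Finset.mul_sum,
    eq_sub_iff_add_eq'.mpr (eisensteinSum_eq_G_add_sum hLM (by omega)).symm]
  exact mul_mem (natCast_mem k _) (sub_mem hM (G_add_three_mem h2 h3 (2 * m + 1)))

variable [IsIntegrallyClosedIn k ℂ] {n : ℕ} {u : ℂ}

theorem weierstrassP_mem_of_eisensteinSum_mem (h2 : L.g₂ ∈ k) (h3 : L.g₃ ∈ k)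
    (hLM : L.lattice.toAddSubgroup ≤ M) [Finite (M ⧸ L.lattice.toAddSubgroup.addSubgroupOf M)]
    (hM : ∀ m, eisensteinSum M (2 * m + 4) ∈ k) (hu : u ∈ M) (huL : u ∉ L.lattice) :
    ℘[L] u ∈ k := by
  classical
  have := Fintype.ofFinite (M ⧸ L.lattice.toAddSubgroup.addSubgroupOf M)
  have weierstrassP_neg_out_mem := mem_subfield_of_sum_aeval_mem (d := 1) k
    (x := fun q : {q : M ⧸ L.lattice.toAddSubgroup.addSubgroupOf M // q ≠ 0} ↦
      ℘[L] (-(q.1.out : ℂ))) fun r hr ↦ by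
    obtain ⟨m, rfl⟩ := Nat.exists_eq_add_of_lt hr
    exact ⟨_, (natDegree_iterate_weierstrassSecondDeriv_X _ _ _).trans (by omega),
      sum_aeval_weierstrassP_mem h2 h3 hLM (hM m)⟩
  rw [← weierstrassP_neg_out_mk (⟨u, hu⟩ : M)]
  exact weierstrassP_neg_out_mem ⟨_, fun h ↦ huL ((QuotientAddGroup.eq_zero_iff _).mp h)⟩

theorem weierstrassP_mem_of_nsmul_mem (h2 : L.g₂ ∈ k) (h3 : L.g₃ ∈ k) (hn : n ≠ 0)
    (hu : u ∉ L.lattice) (hnu : n • u ∈ L.lattice) : ℘[L] u ∈ k := by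
  let T := L.lattice.toAddSubgroup.comap (AddMonoidHom.mulLeft (n : ℂ))
  have mem_T_iff (x : ℂ) : x ∈ T ↔ n • x ∈ L.lattice := by simp [T, AddSubgroup.mem_comap]
  have lattice_le_T : L.lattice.toAddSubgroup ≤ T := fun x hx ↦ (mem_T_iff x).mpr (nsmul_mem hx n)
  have := finite_quotient_lattice hn fun x ↦ (mem_T_iff x).mp
  refine weierstrassP_mem_of_eisensteinSum_mem h2 h3 lattice_le_T (fun m ↦ ?_)
    ((mem_T_iff u).mpr hnu) hu
  rw [eisensteinSum_comap_mulLeft _ (Nat.cast_ne_zero.mpr hn), eisensteinSum_lattice]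
  exact mul_mem (pow_mem (natCast_mem k n) _) (G_add_three_mem h2 h3 (2 * m + 1))

theorem sumInvPow_mem_of_nsmul_mem (h2 : L.g₂ ∈ k) (h3 : L.g₃ ∈ k) (hn : n ≠ 0)
    (hnu : n • u ∈ L.lattice) (m : ℕ) : L.sumInvPow u (2 * m + 4) ∈ k := by
  by_cases hu : u ∈ L.lattice
  · rw [sumInvPow_of_mem hu]
    exact G_add_three_mem h2 h3 (2 * m + 1)
  · have weierstrassP_mem := weierstrassP_mem_of_nsmul_mem h2 h3 hn hu hnu
    refine mem_of_mul_mem_left (natCast_mem k (2 * m + 3).factorial)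
      (Nat.cast_ne_zero.mpr (Nat.factorial_ne_zero _)) ?_
    rw [factorial_mul_sumInvPow (a := (⟨_, h2⟩ : k)) (b := ⟨_, h3⟩) rfl rfl hu]
    exact aeval_mem_subfield weierstrassP_mem _

theorem eisensteinSum_mem_of_lattice_le (h2 : L.g₂ ∈ k) (h3 : L.g₃ ∈ k)
    (hLM : L.lattice.toAddSubgroup ≤ M) (hn : n ≠ 0) (hnM : ∀ x ∈ M, n • x ∈ L.lattice) (m : ℕ) :
    eisensteinSum M (2 * m + 4) ∈ k := by
  have := finite_quotient_lattice hn hnM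
  have := Fintype.ofFinite (M ⧸ L.lattice.toAddSubgroup.addSubgroupOf M)
  rw [eisensteinSum_eq_sum_sumInvPow hLM (by omega)]
  refine sum_mem fun q _ ↦ sumInvPow_mem_of_nsmul_mem h2 h3 hn ?_ m
  rw [smul_neg]
  exact neg_mem (hnM _ q.out.2)

theorem eisensteinSum_mem_of_commensurable (h2 : L.g₂ ∈ k) (h3 : L.g₃ ∈ k) {c d : ℕ} (hc : c ≠ 0)
    (hcL : ∀ x ∈ L.lattice, c • x ∈ M) (hd : d ≠ 0) (hdM : ∀ x ∈ M, d • x ∈ L.lattice) (m : ℕ) :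
    eisensteinSum M (2 * m + 4) ∈ k := by
  have hcℂ : (c : ℂ) ≠ 0 := Nat.cast_ne_zero.mpr hc
  refine mem_of_mul_mem_left (pow_mem (natCast_mem k c) (2 * m + 4)) (pow_ne_zero _ hcℂ) ?_
  rw [← eisensteinSum_comap_mulLeft M hcℂ]
  refine eisensteinSum_mem_of_lattice_le h2 h3 (fun x hx ↦ ?_) (mul_ne_zero hd hc)
    (fun x hx ↦ ?_) m
  · simpa [AddSubgroup.mem_comap] using hcL x hx
  · rw [mul_smul]
    exact hdM _ (by simpa [AddSubgroup.mem_comap] using hx)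

end LatticeSums

section FractionalIdeals

variable {K : Type*} [Field K] [NumberField K] {τ : K →+* ℂ}
  {𝔞 : FractionalIdeal (nonZeroDivisors (𝓞 K)) K}

theorem exists_natCast_mem_fractionalIdeal (h𝔞 : 𝔞 ≠ 0) :
    ∃ n : ℕ, n ≠ 0 ∧ (n : K) ∈ 𝔞 := by
  obtain ⟨x, hx0, hx⟩ := FractionalIdeal.exists_ne_zero_mem_isInteger h𝔞
  have absNorm_ne_zero : Ideal.absNorm (Ideal.span {x}) ≠ 0 := by
    simpa [Ideal.absNorm_eq_zero_iff] using hx0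
  obtain ⟨y, hy⟩ := Ideal.mem_span_singleton'.mp (Ideal.absNorm_mem (Ideal.span {x}))
  refine ⟨_, absNorm_ne_zero, ?_⟩
  have := Submodule.smul_mem (𝔞 : Submodule (𝓞 K) K) y hx
  rw [Algebra.smul_def, ← map_mul, hy, map_natCast] at this
  exact this

theorem exists_natCast_mul_eq_algebraMap (h𝔞 : 𝔞 ≠ 0) :
    ∃ n : ℕ, n ≠ 0 ∧ ∀ a ∈ 𝔞, ∃ b : 𝓞 K, algebraMap (𝓞 K) K b = n * a := by
  obtain ⟨n, hn, hn_mem⟩ := exists_natCast_mem_fractionalIdeal (inv_ne_zero h𝔞)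
  exact ⟨n, hn, fun a ha ↦ (FractionalIdeal.mem_one_iff _).mp
    ((FractionalIdeal.mem_inv_iff h𝔞).mp hn_mem a ha)⟩

theorem exists_nsmul_mem_idealMul (h𝔞 : 𝔞 ≠ 0) (S : Set ℂ) :
    ∃ n : ℕ, n ≠ 0 ∧ ∀ s ∈ S, n • s ∈ idealMul τ 𝔞 S := by
  obtain ⟨n, hn, hn_mem⟩ := exists_natCast_mem_fractionalIdeal h𝔞
  refine ⟨n, hn, fun s hs ↦ AddSubgroup.subset_closure ⟨n, hn_mem, s, hs, ?_⟩⟩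
  rw [map_natCast, nsmul_eq_mul]

theorem exists_nsmul_mem_of_mem_idealMul (h𝔞 : 𝔞 ≠ 0) {Λ : AddSubgroup ℂ}
    (hΛ : ∀ a : 𝓞 K, ∀ w ∈ Λ, τ (algebraMap (𝓞 K) K a) * w ∈ Λ) :
    ∃ n : ℕ, n ≠ 0 ∧ ∀ x ∈ idealMul τ 𝔞 Λ, n • x ∈ Λ := by
  obtain ⟨n, hn, hn_mul⟩ := exists_natCast_mul_eq_algebraMap h𝔞
  have idealMul_le : idealMul τ 𝔞 Λ ≤ Λ.comap (nsmulAddMonoidHom n) := by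
    refine (AddSubgroup.closure_le _).mpr ?_
    rintro _ ⟨a, ha, w, hw, rfl⟩
    obtain ⟨b, hb⟩ := hn_mul a ha
    simpa [AddSubgroup.mem_comap, hb, mul_assoc] using hΛ b w hw
  exact ⟨n, hn, idealMul_le⟩

end FractionalIdeals

theorem exists_periodPair_lattice_eq (Λ : AddSubgroup ℂ) [DiscreteTopology Λ]
    (hspan : Submodule.span ℝ (Λ : Set ℂ) = ⊤) :
    ∃ L : PeriodPair, L.lattice.toAddSubgroup = Λ := by
  let S : Submodule ℤ ℂ := AddSubgroup.toIntSubmodule Λ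
  have : DiscreteTopology S := ‹DiscreteTopology Λ›
  have : IsZLattice ℝ S := ⟨hspan⟩
  have := ZLattice.module_free ℝ S
  have := ZLattice.module_finite ℝ S
  have finrank_eq_two : Module.finrank ℤ S = 2 := by
    rw [ZLattice.rank ℝ S, Complex.finrank_real_complex]
  let b : Module.Basis (Fin 2) ℤ S := Module.finBasisOfFinrankEq ℤ S finrank_eq_two
  let B := b.ofZLatticeBasis ℝ S
  have cons_eq : ![B 0, B 1] = B := by ext i; fin_cases i <;> rfl
  have span_range : Submodule.span ℤ {B 0, B 1} = S := by
    rw [← b.ofZLatticeBasis_span ℝ S, ← Matrix.range_cons_cons_empty, cons_eq]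
  exact ⟨⟨B 0, B 1, cons_eq ▸ B.linearIndependent⟩, congrArg Submodule.toAddSubgroup span_range⟩

instance isIntegrallyClosedIn_algebraicClosure_toSubfield {F E : Type*} [Field F] [Field E]
    [Algebra F E] : IsIntegrallyClosedIn (algebraicClosure F E).toSubfield E :=
  inferInstanceAs (IsIntegrallyClosedIn (integralClosure F E) E)

theorem stmt_2_general {K : Type*} [Field K] [NumberField K] {τ : K →+* ℂ} {Λ : AddSubgroup ℂ}
    [DiscreteTopology Λ] (hspan : Submodule.span ℝ (Λ : Set ℂ) = ⊤)
    (hmul : ∀ a : 𝓞 K, ∀ w ∈ Λ, τ (algebraMap (𝓞 K) K a) * w ∈ Λ)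
    {F : Type*} [Field F] [Algebra F ℂ] (h2 : IsAlgebraic F (g₂ Λ)) (h3 : IsAlgebraic F (g₃ Λ))
    {𝔞 : FractionalIdeal (nonZeroDivisors (𝓞 K)) K} (h𝔞 : 𝔞 ≠ 0) :
    IsAlgebraic F (g₂ (idealMul τ 𝔞 Λ)) ∧ IsAlgebraic F (g₃ (idealMul τ 𝔞 Λ)) := by
  obtain ⟨L, rfl⟩ := exists_periodPair_lattice_eq Λ hspan
  let k : Subfield ℂ := (algebraicClosure F ℂ).toSubfield
  have mem_k_iff (z : ℂ) : z ∈ k ↔ IsAlgebraic F z := mem_algebraicClosure_iff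
  simp only [← mem_k_iff, g₂_eq_eisensteinSum, g₃_eq_eisensteinSum] at h2 h3 ⊢
  obtain ⟨c, hc, hcΛ⟩ := exists_nsmul_mem_idealMul (τ := τ) h𝔞 L.lattice.toAddSubgroup
  obtain ⟨d, hd, hdM⟩ := exists_nsmul_mem_of_mem_idealMul h𝔞 hmul
  have eisensteinSum_mem := eisensteinSum_mem_of_commensurable h2 h3 hc hcΛ hd hdM
  exact ⟨mul_mem (ofNat_mem k 60) (eisensteinSum_mem 0),
    mul_mem (ofNat_mem k 140) (eisensteinSum_mem 1)⟩

/-- If `Λ` is a lattice in `ℂ` with CM by `R = τ(𝓞 K)` and `g₂ Λ`, `g₃ Λ`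
are algebraic over `ℚ`, then for every nonzero fractional ideal `𝔞` of `𝓞 K`, the values
`g₂ (𝔞·Λ)` and `g₃ (𝔞·Λ)` are also algebraic over `ℚ`. -/
theorem stmt_2
    (K : Type*) [Field K] [NumberField K]
    (hdeg : Module.finrank ℚ K = 2)
    (hcplx : IsEmpty (K →+* ℝ))
    (τ : K →+* ℂ)
    (Λ : AddSubgroup ℂ)
    (hdisc : DiscreteTopology Λ)
    (hspan : Submodule.span ℝ (Λ : Set ℂ) = ⊤)
    (hCM : {z : ℂ | ∀ w ∈ Λ, z * w ∈ Λ} =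
      Set.range fun a : 𝓞 K => τ (algebraMap (𝓞 K) K a))
    (h2 : IsAlgebraic ℚ (g₂ Λ)) (h3 : IsAlgebraic ℚ (g₃ Λ))
    (𝔞 : FractionalIdeal (nonZeroDivisors (𝓞 K)) K) (h𝔞 : 𝔞 ≠ 0) :
    IsAlgebraic ℚ (g₂ (idealMul τ 𝔞 (Λ : Set ℂ))) ∧
      IsAlgebraic ℚ (g₃ (idealMul τ 𝔞 (Λ : Set ℂ))) := by
  exact stmt_2_general hspan (fun a ↦ hCM.ge ⟨a, rfl⟩) h2 h3 h𝔞
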